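/- Let q be an integer with q ≥ 3 and let A ⊂ ℚ be a finite set with #A = q. Then K(q,A) has positive Lebesgue measure if and only if there exists an integer p ≥ 2 with gcd(p,q) = 1 such that the intersection D_p ∩ K(q,A) is an infinite set. -/

import Mathlib

open MeasureTheory

/-- The self-similar set `K(q,A) = { ∑_{i=1}^∞ a_i/q^i : a_i ∈ A }`. -/
noncomputable def Kset (q : ℕ) (A : Finset ℚ) : Set ℝ :=
  { x : ℝ | ∃ a : ℕ → ℚ, (∀ i, a i ∈ A) ∧ x = ∑' i : ℕ, (a i : ℝ) / (q : ℝ) ^ (i + 1) }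

/-- The set `D_p = ⋃_{n≥1} ℤ/pⁿ` of rationals with a finite `p`-ary expansion. -/
def Dset (p : ℕ) : Set ℝ :=
  { x : ℝ | ∃ n : ℕ, 1 ≤ n ∧ ∃ m : ℤ, x = (m : ℝ) / (p : ℝ) ^ n }


lemma Kset_summable (q : ℕ) (hq : 3 ≤ q) (A : Finset ℚ) (a : ℕ → ℚ) (ha : ∀ i, a i ∈ A) :
    Summable (fun i : ℕ => (a i : ℝ) / (q : ℝ) ^ (i + 1)) ∧ True := by
  refine ⟨?_, trivial⟩
  have hq' : (3:ℝ) ≤ q := by exact_mod_cast hq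
  have hg : Summable (fun i : ℕ => (∑ b ∈ A, |(b:ℝ)|) * (1 / (q:ℝ)) ^ (i+1)) := by
    apply Summable.mul_left
    exact (summable_nat_add_iff 1).2
      (summable_geometric_of_lt_one (by positivity) (by rw [div_lt_one] <;> linarith))
  refine Summable.of_norm_bounded hg ?_
  intro i
  rw [norm_div, Real.norm_eq_abs, norm_pow, Real.norm_natCast, div_pow, one_pow, mul_one_div]
  gcongr
  exact Finset.single_le_sum (f := fun b : ℚ => |(b:ℝ)|) (fun _ _ => abs_nonneg _) (ha i)

lemma Kset_compact (q : ℕ) (hq : 3 ≤ q) (A : Finset ℚ) : IsCompact (Kset q A) := by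
  have hq' : (3:ℝ) ≤ q := by exact_mod_cast hq
  have h : Kset q A = Set.range
      (fun a : ℕ → A => ∑' i : ℕ, (((a i : ℚ)) : ℝ) / (q : ℝ) ^ (i + 1)) := by
    ext x
    constructor
    · rintro ⟨a, ha, rfl⟩
      exact ⟨fun i => ⟨a i, ha i⟩, rfl⟩
    · rintro ⟨a, rfl⟩
      exact ⟨fun i => a i, fun i => (a i).2, rfl⟩
  rw [h]
  apply isCompact_range
  have hg : Summable (fun i : ℕ => (∑ b ∈ A, |(b:ℝ)|) * (1 / (q:ℝ)) ^ (i+1)) := by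
    apply Summable.mul_left
    exact (summable_nat_add_iff 1).2
      (summable_geometric_of_lt_one (by positivity) (by rw [div_lt_one] <;> linarith))
  refine continuous_tsum ?_ hg ?_
  · intro i
    apply Continuous.div_const
    exact Rat.continuous_coe_real.comp (continuous_subtype_val.comp (continuous_apply i))
  intro i a
  rw [norm_div, Real.norm_eq_abs, norm_pow, Real.norm_natCast, div_pow, one_pow, mul_one_div]
  gcongr
  exact Finset.single_le_sum (f := fun b : ℚ => |(b:ℝ)|) (fun _ _ => abs_nonneg _) (a i).2

lemma Kset_nonempty (q : ℕ) (A : Finset ℚ) (hA : A.Nonempty) : (Kset q A).Nonempty := by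
  obtain ⟨a, ha⟩ := hA
  exact ⟨_, fun _ => a, fun _ => ha, rfl⟩

lemma Kset_selfsim (q : ℕ) (hq : 3 ≤ q) (A : Finset ℚ) (x : ℝ) :
    x ∈ Kset q A ↔ ∃ b ∈ A, q * x - (b:ℝ) ∈ Kset q A := by
  have hq0 : (q:ℝ) ≠ 0 := by positivity
  have key : ∀ a : ℕ → ℚ, (∀ i, a i ∈ A) → (q:ℝ) * ∑' i : ℕ, (a i : ℝ) / (q : ℝ) ^ (i + 1)
      = a 0 + ∑' i : ℕ, (a (i+1) : ℝ) / (q : ℝ) ^ (i + 1) := by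
    intro a ha
    rw [(Kset_summable q hq A a ha).1.tsum_eq_zero_add, mul_add, ← tsum_mul_left]
    congr 1
    · field_simp; ring
    · congr 1; ext i; field_simp; ring
  constructor
  · rintro ⟨a, ha, rfl⟩
    refine ⟨a 0, ha 0, fun i => a (i+1), fun i => ha _, ?_⟩
    rw [key a ha]; ring
  · rintro ⟨b, hb, a, ha, h⟩
    refine ⟨fun i => Nat.casesOn i b a, ?_, ?_⟩
    · rintro (_|i)
      · exact hb
      · exact ha i
    · have := key (fun i => Nat.casesOn i b a) (by
        rintro (_|i)
        · exact hb
        · exact ha i)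
      apply mul_left_cancel₀ hq0
      rw [this]
      change (q:ℝ) * x = (b:ℝ) + ∑' i : ℕ, (a i : ℝ) / (q : ℝ) ^ (i + 1)
      rw [← h]; ring

lemma reduction (q : ℕ) (hq : 3 ≤ q) (A : Finset ℚ) (hA : A.card = q) :
    ∃ (D : ℕ) (B : Finset ℤ) (K : Set ℝ), 0 < D ∧ B.card = q ∧ IsCompact K ∧ K.Nonempty ∧
      (∀ x : ℝ, x ∈ K ↔ ∃ b ∈ B, q * x - (b:ℝ) ∈ K) ∧ (∀ x : ℝ, D * x ∈ K ↔ x ∈ Kset q A) := by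
  classical
  set D : ℕ := ∏ a ∈ A, a.den with hD
  have hDpos : 0 < D := Finset.prod_pos (fun a _ => a.den_pos)
  have hnum : ∀ a ∈ A, (((D * a : ℚ).num : ℤ) : ℚ) = D * a := by
    intro a ha
    obtain ⟨e, he⟩ := Finset.dvd_prod_of_mem (fun a : ℚ => a.den) ha
    have : (D * a : ℚ) = ((e * a.num : ℤ) : ℚ) := by
      rw [hD, he]; push_cast
      rw [mul_comm (a.den : ℚ), mul_assoc, mul_comm (a.den:ℚ), Rat.mul_den_eq_num]
    rw [this, Rat.num_intCast]
  have hnumR : ∀ a ∈ A, (((D * a : ℚ).num : ℤ) : ℝ) = D * (a:ℝ) := by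
    intro a ha
    exact_mod_cast congrArg (fun r : ℚ => (r:ℝ)) (hnum a ha)
  have hD0 : (D:ℝ) ≠ 0 := by positivity
  have hDq : (D:ℚ) ≠ 0 := by positivity
  refine ⟨D, A.image (fun a => (D * a : ℚ).num), (fun x : ℝ => D * x) '' Kset q A, hDpos, ?_, ?_, ?_,
    ?_, ?_⟩
  · rw [Finset.card_image_of_injOn, hA]
    intro a ha b hb hab
    have h1 := hnum a ha
    have h2 := hnum b hb
    simp only at hab
    rw [hab, h2] at h1
    exact (mul_left_cancel₀ hDq h1).symm
  · exact (Kset_compact q hq A).image (by fun_prop)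
  · exact (Kset_nonempty q A (Finset.card_pos.1 (by omega))).image _
  · intro x
    constructor
    · rintro ⟨y, hy, rfl⟩
      obtain ⟨b, hb, h⟩ := (Kset_selfsim q hq A y).1 hy
      refine ⟨_, Finset.mem_image_of_mem _ hb, _, h, ?_⟩
      rw [hnumR b hb]; ring
    · rintro ⟨c, hc, y, hy, h⟩
      obtain ⟨b, hb, rfl⟩ := Finset.mem_image.1 hc
      rw [hnumR b hb] at h
      refine ⟨(y + b)/q, (Kset_selfsim q hq A _).2 ⟨b, hb, ?_⟩, ?_⟩
      · convert hy using 1; field_simp; ring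
      · have : (q:ℝ) ≠ 0 := by positivity
        simp only at h ⊢
        field_simp
        linarith
  · intro x
    constructor
    · rintro ⟨y, hy, h⟩
      rwa [← mul_left_cancel₀ hD0 h]
    · exact fun h => ⟨x, h, rfl⟩

lemma nt_lemma (p q : ℕ) (hp : 2 ≤ p) (hq : 3 ≤ q) (hpq : Nat.Coprime p q) :
    ∃ M : ℕ, 0 < M ∧ ∀ d n o : ℕ, d ∣ p ^ n → 0 < o → (d:ℤ) ∣ (q:ℤ)^o - 1 → d ≤ M * o := by
  set t := Nat.totient (p^2) with ht
  have htpos : 0 < t := Nat.totient_pos.2 (by positivity)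
  have h1 : q ^ t ≡ 1 [MOD p^2] := Nat.ModEq.pow_totient (Nat.Coprime.pow_right 2 hpq.symm)
  have hQ1 : 1 < q ^ t := Nat.one_lt_pow htpos.ne' (by omega)
  have hdiv : ((p:ℤ)^2) ∣ (q:ℤ)^t - 1 := by
    have := (Nat.modEq_iff_dvd.1 h1.symm)
    push_cast at this
    exact this
  refine ⟨q^t - 1, by omega, ?_⟩
  intro d n o hd ho hdo
  apply Nat.le_of_dvd (Nat.mul_pos (by omega) ho)
  rw [Nat.dvd_iff_prime_pow_dvd_dvd]
  intro l k hl hk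
  rcases Nat.eq_zero_or_pos k with rfl | hkpos
  · simp
  have hlp : l ∣ p := hl.dvd_of_dvd_pow ((dvd_pow_self l hkpos.ne').trans (hk.trans hd))
  have hl2 : ((l:ℤ)^2) ∣ (q:ℤ)^t - 1 :=
    (pow_dvd_pow_of_dvd (Int.natCast_dvd_natCast.2 hlp) 2).trans hdiv
  have hl1 : (l:ℤ) ∣ (q:ℤ)^t - 1 := (dvd_pow_self _ two_ne_zero).trans hl2
  have hlQ : ¬ (l:ℤ) ∣ (q:ℤ)^t := by
    intro h
    have : (l:ℤ) ∣ 1 := by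
      have := dvd_sub h hl1
      simpa using this
    exact hl.one_lt.ne' (by exact_mod_cast Int.eq_one_of_dvd_one (by positivity) this)
  have hdQ : ((l:ℤ)^k) ∣ ((q:ℤ)^t)^o - 1^o := by
    have a1 : (l:ℤ)^k ∣ d := by exact_mod_cast hk
    refine (a1.trans hdo).trans ?_
    rw [one_pow, ← pow_mul, mul_comm, pow_mul]
    simpa using sub_dvd_pow_sub_pow ((q:ℤ)^o) 1 t
  have hem : emultiplicity (l:ℤ) (((q:ℤ)^t)^o - 1^o) = emultiplicity (l:ℤ) ((q:ℤ)^t - 1)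
      + emultiplicity (l:ℤ) (o:ℤ) := by
    rcases hl.eq_two_or_odd' with rfl | hodd
    · exact Int.two_pow_sub_pow' o (by simpa using hl2) (by simpa using hlQ)
    · rw [Int.emultiplicity_pow_sub_pow hl hodd (by simpa using hl1) hlQ, Int.natCast_emultiplicity]
  have hpr : Prime (l:ℤ) := Nat.prime_iff_prime_int.1 hl
  rw [← emultiplicity_mul hpr] at hem
  have := le_emultiplicity_of_pow_dvd hdQ
  rw [hem] at this
  have h3 := pow_dvd_of_le_emultiplicity this
  have h4 : ((q^t - 1 : ℕ) : ℤ) = (q:ℤ)^t - 1 := by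
    rw [Nat.cast_sub hQ1.le]; simp
  rw [← h4] at h3
  exact_mod_cast h3

lemma interior_of_pos (q : ℕ) (hq : 3 ≤ q) (B : Finset ℤ) (K : Set ℝ) (hK : IsCompact K)
    (hs : ∀ x : ℝ, x ∈ K ↔ ∃ b ∈ B, q * x - (b:ℝ) ∈ K) (hpos : 0 < volume K) :
    (interior K).Nonempty := by
  let π : ℝ → UnitAddCircle := fun x => (x : UnitAddCircle)
  have hπc : Continuous π := AddCircle.continuous_mk' 1
  set S : Set UnitAddCircle := π '' K with hS
  have hScl : IsClosed S := (hK.image hπc).isClosed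
  have herg : Ergodic (fun y : UnitAddCircle => q • y) := AddCircle.ergodic_nsmul (by omega)
  have hsub : S ⊆ (fun y : UnitAddCircle => q • y) ⁻¹' S := by
    rintro _ ⟨x, hx, rfl⟩
    obtain ⟨b, hb, h⟩ := (hs x).1 hx
    refine ⟨_, h, ?_⟩
    simp only [π]
    rw [AddCircle.coe_sub]
    have : ((b:ℝ) : UnitAddCircle) = 0 := by
      rw [AddCircle.coe_eq_zero_iff]
      exact ⟨b, by simp⟩
    rw [this, sub_zero, ← nsmul_eq_mul, AddCircle.coe_nsmul]
  have hmem : ∀ x, π x ∈ S → ∃ n : ℤ, x - n ∈ K := by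
    rintro x ⟨y, hy, h⟩
    have h' : ((x - y : ℝ) : UnitAddCircle) = 0 := by
      rw [AddCircle.coe_sub, sub_eq_zero]; exact h.symm
    obtain ⟨n, hn⟩ := (AddCircle.coe_eq_zero_iff (1:ℝ)).1 h'
    refine ⟨n, ?_⟩
    have : x - n = y := by
      simp at hn
      linarith
    rwa [this]
  rcases herg.ae_empty_or_univ_of_ae_le_preimage hScl.measurableSet.nullMeasurableSet
    (Filter.Eventually.of_forall hsub) with h | h
  · exfalso
    have h0 : volume S = 0 := by rw [measure_congr h]; simp
    have h1 : ∀ n : ℤ, volume (K ∩ Set.Ioc (n:ℝ) (n+1)) = 0 := by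
      intro n
      have hm := UnitAddCircle.measurePreserving_mk n
      have := hm.measure_preimage hScl.measurableSet.nullMeasurableSet
      rw [h0, Measure.restrict_apply (hScl.measurableSet.preimage hm.measurable)] at this
      refine measure_mono_null ?_ this
      rintro x ⟨hx, hx'⟩
      exact ⟨⟨x, hx, rfl⟩, hx'⟩
    have h2 : K ⊆ ⋃ n : ℤ, K ∩ Set.Ioc (n:ℝ) (n+1) := by
      intro x hx
      have : x ∈ ⋃ n : ℤ, Set.Ioc (n:ℝ) (n+1) := by rw [iUnion_Ioc_intCast]; trivial
      rw [← Set.inter_iUnion]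
      exact ⟨hx, this⟩
    exact hpos.ne' (measure_mono_null h2 (measure_iUnion_null h1))
  · have hden : Dense S := Measure.dense_of_ae (μ := volume) (p := fun x => x ∈ S)
      (Filter.eventuallyEq_univ.1 h)
    have huniv : S = Set.univ := by rw [← hScl.closure_eq, hden.closure_eq]
    obtain ⟨n, hn⟩ := nonempty_interior_of_iUnion_of_closed
      (f := fun n : ℤ => (fun x : ℝ => x - n) ⁻¹' K)
      (fun n => hK.isClosed.preimage (by fun_prop)) (by
        rw [Set.eq_univ_iff_forall]
        intro x
        obtain ⟨n, hn⟩ := hmem x (by rw [huniv]; trivial)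
        exact Set.mem_iUnion.2 ⟨n, hn⟩)
    have : (fun x : ℝ => x - n) ⁻¹' K = (Homeomorph.subRight (n:ℝ)) ⁻¹' K := rfl
    rw [this, ← Homeomorph.preimage_interior] at hn
    obtain ⟨x, hx⟩ := hn
    exact ⟨_, hx⟩

lemma infinite_of_interior (p : ℕ) (hp : 2 ≤ p) (K : Set ℝ) (h : (interior K).Nonempty) :
    (Dset p ∩ K).Infinite := by
  have hd : Dense (Dset p) := by
    rw [dense_iff_exists_between]
    intro a b hab
    have hp1 : (1:ℝ) < p := by exact_mod_cast hp
    obtain ⟨n, hn⟩ := exists_pow_lt_of_lt_one (sub_pos.2 hab) (inv_lt_one_of_one_lt₀ hp1)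
    have hn' : ((p:ℝ)^(n+1))⁻¹ < b - a := by
      refine lt_of_le_of_lt ?_ hn
      rw [inv_pow]
      gcongr
      · exact hp1.le
      · omega
    have hpp : (0:ℝ) < (p:ℝ)^(n+1) := by positivity
    refine ⟨(⌊a * p^(n+1)⌋ + 1 : ℤ) / (p:ℝ)^(n+1), ⟨n+1, by omega, _, rfl⟩, ?_, ?_⟩
    · rw [lt_div_iff₀ hpp]; push_cast; exact Int.lt_floor_add_one _
    · rw [div_lt_iff₀ hpp]; push_cast
      have := Int.floor_le (a * p^(n+1))
      rw [inv_lt_iff_one_lt_mul₀ hpp] at hn'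
      nlinarith
  have h1 : (interior K ∩ Dset p).Infinite := by
    intro hfin
    have h2 : Dense (Dset p \ (interior K ∩ Dset p)) := hd.sdiff_finite hfin
    obtain ⟨x, hx, hx'⟩ := h2.inter_open_nonempty _ isOpen_interior h
    exact hx'.2 ⟨hx, hx'.1⟩
  exact h1.mono (fun x hx => ⟨hx.2, interior_subset hx.1⟩)

lemma abs_mul_pos_aux (y : ℝ) {z : ℝ} (hz : 0 < z) : |y * z| = |y| * z := by
  rw [abs_mul, abs_of_pos hz]

/-- Level-`n` digit sums. -/
def levelSet (q : ℕ) (B : Finset ℤ) : ℕ → Finset ℤ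
  | 0 => {0}
  | n + 1 => (levelSet q B n ×ˢ B).image (fun c => (q:ℤ) * c.1 + c.2)

lemma levelSet_selfsim (q : ℕ) (B : Finset ℤ) (K : Set ℝ)
    (hs : ∀ x : ℝ, x ∈ K ↔ ∃ b ∈ B, q * x - (b:ℝ) ∈ K) (n : ℕ) (x : ℝ) :
    x ∈ K ↔ ∃ c ∈ levelSet q B n, (q:ℝ)^n * x - (c:ℝ) ∈ K := by
  induction n with
  | zero => simp [levelSet]
  | succ n ih =>
    rw [ih]
    constructor
    · rintro ⟨c, hc, h⟩
      obtain ⟨b, hb, h'⟩ := (hs _).1 h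
      refine ⟨q * c + b, Finset.mem_image.2 ⟨(c, b), Finset.mem_product.2 ⟨hc, hb⟩, rfl⟩, ?_⟩
      convert h' using 1
      push_cast; ring
    · rintro ⟨e, he, h⟩
      obtain ⟨⟨c, b⟩, hcb, rfl⟩ := Finset.mem_image.1 he
      obtain ⟨hc, hb⟩ := Finset.mem_product.1 hcb
      refine ⟨c, hc, (hs _).2 ⟨b, hb, ?_⟩⟩
      convert h using 1
      push_cast; ring

lemma levelSet_add (q : ℕ) (B : Finset ℤ) (m n : ℕ) (e : ℤ) (he : e ∈ levelSet q B (m + n)) :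
    ∃ c ∈ levelSet q B m, ∃ b ∈ levelSet q B n, e = (q:ℤ)^n * c + b := by
  induction n generalizing e with
  | zero => exact ⟨e, he, 0, by simp [levelSet], by simp⟩
  | succ n ih =>
    obtain ⟨⟨c, b⟩, hcb, rfl⟩ := Finset.mem_image.1 he
    obtain ⟨hc, hb⟩ := Finset.mem_product.1 hcb
    obtain ⟨c', hc', b', hb', h⟩ := ih c hc
    refine ⟨c', hc', q * b' + b, Finset.mem_image.2 ⟨(b', b), Finset.mem_product.2 ⟨hb', hb⟩, rfl⟩, ?_⟩
    simp only at h ⊢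
    rw [h]; ring

lemma levelSet_card_add (q : ℕ) (B : Finset ℤ) (m n : ℕ) :
    (levelSet q B (m + n)).card ≤ (levelSet q B m).card * (levelSet q B n).card := by
  rw [← Finset.card_product]
  refine le_trans (Finset.card_le_card (t := (levelSet q B m ×ˢ levelSet q B n).image
    (fun c => (q:ℤ)^n * c.1 + c.2)) ?_) Finset.card_image_le
  intro e he
  obtain ⟨c, hc, b, hb, h⟩ := levelSet_add q B m n e he
  exact Finset.mem_image.2 ⟨(c, b), Finset.mem_product.2 ⟨hc, hb⟩, h.symm⟩

lemma levelSet_card_le (q : ℕ) (B : Finset ℤ) (hB : B.card = q) (n : ℕ) :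
    (levelSet q B n).card ≤ q ^ n := by
  induction n with
  | zero => simp [levelSet]
  | succ n ih =>
    refine Finset.card_image_le.trans ?_
    rw [Finset.card_product, hB, pow_succ]
    gcongr

lemma pos_of_full (q : ℕ) (hq : 3 ≤ q) (B : Finset ℤ) (K : Set ℝ) (hK : IsCompact K)
    (hne : K.Nonempty) (hs : ∀ x : ℝ, x ∈ K ↔ ∃ b ∈ B, q * x - (b:ℝ) ∈ K)
    (hfull : ∀ n, (levelSet q B n).card = q ^ n) : 0 < volume K := by
  have hq' : (3:ℝ) ≤ q := by exact_mod_cast hq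
  obtain ⟨k, hk⟩ := hne
  have hlim : Filter.Tendsto (fun n : ℕ => (|k| + 1) * ((q:ℝ)⁻¹)^n) Filter.atTop (nhds 0) := by
    rw [← mul_zero (|k|+1)]
    exact (tendsto_pow_atTop_nhds_zero_of_lt_one (by positivity)
      (inv_lt_one_of_one_lt₀ (by linarith))).const_mul _
  have hlim2 := (tendsto_measure_cthickening_of_isCompact (μ := volume) hK).comp hlim
  refine lt_of_lt_of_le zero_lt_one (ge_of_tendsto' hlim2 ?_)
  intro n
  have hqn : (0:ℝ) < (q:ℝ)^n := by positivity
  let U : Set ℝ := ⋃ c ∈ levelSet q B n, Set.Ico ((c:ℝ) / q^n) ((c + 1 : ℝ)/q^n)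
  have hU : volume U = 1 := by
    rw [measure_biUnion_finset]
    · have : ∀ c ∈ levelSet q B n, volume (Set.Ico ((c:ℝ) / q^n) ((c + 1 : ℝ)/q^n))
          = ENNReal.ofReal (1 / (q:ℝ)^n) := by
        intro c _
        rw [Real.volume_Ico]; congr 1; ring
      rw [Finset.sum_congr rfl this, Finset.sum_const, hfull, ← ENNReal.ofReal_nsmul]
      rw [← ENNReal.ofReal_one]; congr 1
      rw [nsmul_eq_mul]; push_cast; field_simp
    · intro c _ c' _ hcc
      rw [Function.onFun, Set.disjoint_left]
      rintro x ⟨h1, h2⟩ ⟨h3, h4⟩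
      rw [div_le_iff₀ hqn] at h1 h3
      rw [lt_div_iff₀ hqn] at h2 h4
      apply hcc
      have e1 : (c:ℝ) < c' + 1 := by linarith
      have e2 : (c':ℝ) < c + 1 := by linarith
      have e1' : c < c' + 1 := by exact_mod_cast e1
      have e2' : c' < c + 1 := by exact_mod_cast e2
      omega
    · intro c _; exact measurableSet_Ico
  rw [← hU]
  apply measure_mono
  intro x hx
  obtain ⟨c, hc, h1, h2⟩ := Set.mem_iUnion₂.1 hx
  have hmem : (c + k) / (q:ℝ)^n ∈ K := by
    refine (levelSet_selfsim q B K hs n _).2 ⟨c, hc, ?_⟩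
    convert hk using 1
    field_simp; ring
  refine Metric.mem_cthickening_of_dist_le _ _ _ _ hmem ?_
  rw [div_le_iff₀ hqn] at h1
  rw [lt_div_iff₀ hqn] at h2
  beta_reduce
  rw [Real.dist_eq, inv_pow, ← div_eq_mul_inv, le_div_iff₀ hqn]
  rw [← abs_mul_pos_aux _ hqn, sub_mul, div_mul_cancel₀ _ hqn.ne']
  rw [abs_le]
  have := neg_abs_le k
  have := le_abs_self k
  constructor <;> linarith

lemma decay (q : ℕ) (hq : 3 ≤ q) (B : Finset ℤ) (hB : B.card = q)
    (hfull : ¬ ∀ n, (levelSet q B n).card = q ^ n) (C : ℕ) :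
    ∃ N, ∀ n, N ≤ n → C * (levelSet q B n).card < q ^ n := by
  push Not at hfull
  obtain ⟨m, hm⟩ := hfull
  have hlt : (levelSet q B m).card < q ^ m := lt_of_le_of_ne (levelSet_card_le q B hB m) hm
  have hmul : ∀ k, (levelSet q B (m * k)).card ≤ (levelSet q B m).card ^ k := by
    intro k
    induction k with
    | zero => simp [levelSet]
    | succ k ih =>
      rw [mul_add, mul_one, pow_succ]
      exact (levelSet_card_add q B _ _).trans (by gcongr)
  have hqm : (0:ℝ) < (q:ℝ)^m := by positivity
  obtain ⟨k, hk⟩ := exists_pow_lt_of_lt_one (show (0:ℝ) < 1 / (C + 1) by positivity)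
    (show ((levelSet q B m).card : ℝ) / (q:ℝ)^m < 1 by
      rw [div_lt_one hqm]; exact_mod_cast hlt)
  have hk' : C * (levelSet q B m).card ^ k < q ^ (m * k) := by
    rw [div_pow, ← pow_mul, div_lt_div_iff₀ (by positivity) (by positivity), one_mul] at hk
    have h2 : (levelSet q B m).card ^ k * (C + 1) < q ^ (m * k) := by exact_mod_cast hk
    have : C * (levelSet q B m).card ^ k ≤ (levelSet q B m).card ^ k * (C + 1) := by
      rw [mul_comm]; gcongr; omega
    omega
  refine ⟨m * k, ?_⟩
  intro n hn
  obtain ⟨j, rfl⟩ := Nat.exists_eq_add_of_le hn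
  calc C * (levelSet q B (m * k + j)).card
      ≤ C * ((levelSet q B (m*k)).card * (levelSet q B j).card) := by
        gcongr; exact levelSet_card_add q B _ _
    _ ≤ C * ((levelSet q B m).card ^ k * q ^ j) := by
        gcongr
        · exact hmul k
        · exact levelSet_card_le q B hB j
    _ = (C * (levelSet q B m).card ^ k) * q ^ j := by ring
    _ < q ^ (m * k) * q ^ j := by
        apply Nat.mul_lt_mul_of_pos_right hk'; positivity
    _ = _ := by rw [pow_add]

lemma count_upper (q : ℕ) (hq : 3 ≤ q) (B : Finset ℤ) (K : Set ℝ) (R : ℕ)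
    (hR : ∀ x ∈ K, |x| ≤ R) (hs : ∀ x : ℝ, x ∈ K ↔ ∃ b ∈ B, q * x - (b:ℝ) ∈ K)
    (d n : ℕ) (hd : 0 < d) (hdn : d ≤ q ^ n) :
    ∃ S : Finset ℤ, (∀ s : ℤ, (s:ℝ)/d ∈ K → s ∈ S) ∧ S.card ≤ (levelSet q B n).card * (2*R+2) := by
  refine ⟨(levelSet q B n ×ˢ Finset.Icc (-(R:ℤ)) (R+1)).image
    (fun c => ⌊(c.1:ℝ) * d / q^n⌋ + c.2), ?_, ?_⟩
  · intro s hsK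
    obtain ⟨c, hc, h⟩ := (levelSet_selfsim q B K hs n _).1 hsK
    have hb := hR _ h
    have hqn : (0:ℝ) < (q:ℝ)^n := by positivity
    have hd' : (0:ℝ) < d := by positivity
    have hdn' : (d:ℝ) ≤ (q:ℝ)^n := by exact_mod_cast hdn
    have hb2 : |(s:ℝ) - c * d / q^n| ≤ R := by
      have : (s:ℝ) - c * d / q^n = (q^n * (s/d) - c) * (d / q^n) := by field_simp
      rw [this, abs_mul, abs_of_pos (div_pos hd' hqn)]
      calc _ ≤ (R:ℝ) * 1 := by
            gcongr
            rw [div_le_one hqn]; exact hdn'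
        _ = R := mul_one _
    refine Finset.mem_image.2 ⟨(c, s - ⌊(c:ℝ) * d / q^n⌋), Finset.mem_product.2 ⟨hc, ?_⟩, by simp⟩
    have f1 := Int.floor_le ((c:ℝ) * d / q^n)
    have f2 := Int.lt_floor_add_one ((c:ℝ) * d / q^n)
    rw [abs_le] at hb2
    rw [Finset.mem_Icc]
    constructor
    · have : (-(R:ℝ)) ≤ s - ⌊(c:ℝ) * d / q^n⌋ := by linarith
      exact_mod_cast this
    · have : (s:ℝ) - ⌊(c:ℝ) * d / q^n⌋ ≤ R + 1 := by linarith
      exact_mod_cast this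
  · refine Finset.card_image_le.trans ?_
    rw [Finset.card_product, Int.card_Icc]
    gcongr
    omega

lemma count_lower (q : ℕ) (hq : 3 ≤ q) (B : Finset ℤ) (K : Set ℝ)
    (hs : ∀ x : ℝ, x ∈ K ↔ ∃ b ∈ B, q * x - (b:ℝ) ∈ K)
    (d : ℕ) (hd : 0 < d) (hdq : Nat.Coprime q d) (s₀ : ℤ) (hs₀ : IsCoprime s₀ (d:ℤ))
    (hK : (s₀:ℝ)/d ∈ K) (S : Finset ℤ) (hS : ∀ s : ℤ, (s:ℝ)/d ∈ K → s ∈ S) :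
    ∃ o : ℕ, 0 < o ∧ (d:ℤ) ∣ (q:ℤ)^o - 1 ∧ o ≤ S.card := by
  classical
  haveI : NeZero d := ⟨hd.ne'⟩
  have hd' : (d:ℝ) ≠ 0 := by positivity
  have hu : IsUnit (q : ZMod d) := (ZMod.isUnit_iff_coprime q d).2 hdq
  have hs0u : IsUnit (s₀ : ZMod d) := by
    have := hs₀.map (Int.castRingHom (ZMod d))
    simpa [isCoprime_zero_right] using this
  have horb : ∀ k : ℕ, ∃ s ∈ S, (s : ZMod d) = (q:ZMod d)^k * s₀ := by
    have : ∀ k : ℕ, ∃ s : ℤ, (s:ℝ)/d ∈ K ∧ (s : ZMod d) = (q:ZMod d)^k * s₀ := by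
      intro k
      induction k with
      | zero => exact ⟨s₀, hK, by simp⟩
      | succ k ih =>
        obtain ⟨s, h1, h2⟩ := ih
        obtain ⟨b, hb, h⟩ := (hs _).1 h1
        refine ⟨q * s - b * d, ?_, ?_⟩
        · convert h using 1
          push_cast; field_simp
        · push_cast; rw [h2, ZMod.natCast_self]; ring
    intro k
    obtain ⟨s, h1, h2⟩ := this k
    exact ⟨s, hS s h1, h2⟩
  refine ⟨orderOf (q : ZMod d), ?_, ?_, ?_⟩
  · obtain ⟨u, hu'⟩ := hu
    rw [← hu', orderOf_units]; exact orderOf_pos u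
  · rw [← ZMod.intCast_zmod_eq_zero_iff_dvd]
    push_cast; rw [pow_orderOf_eq_one, sub_self]
  · have hc : ((Finset.range (orderOf (q : ZMod d))).image (fun k => (q:ZMod d)^k * s₀)).card
        = orderOf (q : ZMod d) := by
      rw [Finset.card_image_of_injOn, Finset.card_range]
      intro i hi j hj hij
      have := hs0u.mul_right_cancel hij
      exact pow_injOn_Iio_orderOf (by simpa using hi) (by simpa using hj) this
    rw [← hc]
    refine le_trans (Finset.card_le_card (t := S.image (fun s : ℤ => (s : ZMod d))) ?_)
      Finset.card_image_le
    intro z hz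
    obtain ⟨k, _, rfl⟩ := Finset.mem_image.1 hz
    obtain ⟨s, h1, h2⟩ := horb k
    exact Finset.mem_image.2 ⟨s, h1, h2⟩

lemma finite_of_not_full (p q : ℕ) (hp : 2 ≤ p) (hq : 3 ≤ q) (hpq : Nat.Coprime p q)
    (B : Finset ℤ) (hB : B.card = q) (K : Set ℝ) (hK : IsCompact K)
    (hs : ∀ x : ℝ, x ∈ K ↔ ∃ b ∈ B, q * x - (b:ℝ) ∈ K)
    (hfull : ¬ ∀ n, (levelSet q B n).card = q ^ n) : (Dset p ∩ K).Finite := by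
  obtain ⟨M, hM, hMd⟩ := nt_lemma p q hp hq hpq
  obtain ⟨R, hR⟩ : ∃ R : ℕ, ∀ x ∈ K, |x| ≤ R := by
    obtain ⟨r, hr⟩ := hK.isBounded.exists_norm_le
    obtain ⟨R, hR⟩ := exists_nat_ge r
    exact ⟨R, fun x hx => (hr x hx).trans hR⟩
  obtain ⟨N, hN⟩ := decay q hq B hB hfull (q * M * (2 * R + 2))
  have key : ∀ x ∈ Dset p ∩ K, ∃ d : ℕ, 0 < d ∧ d ≤ q ^ N ∧ ∃ s : ℤ, x = s / d := by
    rintro x ⟨⟨n, hn, m, rfl⟩, hx⟩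
    have hpn : ((p:ℤ)^n) ≠ 0 := by positivity
    set r : ℚ := (m:ℚ) / ((p:ℚ)^n) with hr
    have hrx : (m:ℝ) / (p:ℝ)^n = (r.num : ℝ) / (r.den : ℝ) := by
      have : ((r:ℚ):ℝ) = (r.num : ℝ) / (r.den : ℝ) := Rat.cast_def r
      rw [← this, hr]; push_cast; rfl
    have hdp : r.den ∣ p ^ n := by
      have := Rat.den_dvd m ((p:ℤ)^n)
      have h2 : Rat.divInt m ((p:ℤ)^n) = r := by
        rw [Rat.divInt_eq_div, hr]; push_cast; rfl
      rw [h2] at this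
      exact_mod_cast this
    refine ⟨r.den, r.den_pos, ?_, r.num, hrx⟩
    rw [hrx] at hx
    by_contra hcon
    push Not at hcon
    set d := r.den with hd
    have hd0 : 0 < d := r.den_pos
    set e := Nat.log q d with he
    have h1 : q ^ e ≤ d := Nat.pow_log_le_self q hd0.ne'
    have h2 : d < q ^ (e+1) := Nat.lt_pow_succ_log_self (by omega) d
    have hNe : N ≤ e + 1 := by
      have := hcon.trans h2
      exact ((Nat.pow_lt_pow_iff_right (by omega)).1 this).le
    obtain ⟨S, hS, hSc⟩ := count_upper q hq B K R hR hs d (e+1) hd0 h2.le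
    have hcop : Nat.Coprime q d := Nat.Coprime.coprime_dvd_right hdp (Nat.Coprime.pow_right n hpq.symm)
    have hcop2 : IsCoprime r.num (d:ℤ) := by
      rw [Int.isCoprime_iff_gcd_eq_one]
      exact r.reduced
    obtain ⟨o, ho, hdo, hoS⟩ := count_lower q hq B K hs d hd0 hcop r.num hcop2 hx S hS
    have h3 := hMd d n o hdp ho hdo
    have h4 := hN (e+1) hNe
    have : q ^ (e+1) ≤ q * M * (2*R+2) * (levelSet q B (e+1)).card := by
      calc q ^ (e+1) = q * q ^ e := by ring
        _ ≤ q * (M * ((levelSet q B (e+1)).card * (2*R+2))) := by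
          gcongr
          exact h1.trans (h3.trans (by gcongr; exact hoS.trans hSc))
        _ = _ := by ring
    omega
  have hfin : (⋃ d ∈ Finset.Icc 1 (q^N), (fun s : ℤ => (s:ℝ)/(d:ℝ)) ''
      (Finset.Icc (-((R * q^N : ℕ):ℤ)) (R * q^N : ℕ) : Finset ℤ)).Finite := by
    apply Set.Finite.biUnion (Finset.finite_toSet _)
    intro d _
    exact (Finset.finite_toSet _).image _
  refine hfin.subset ?_
  intro x hx
  obtain ⟨d, hd, hdN, s, rfl⟩ := key x hx
  refine Set.mem_iUnion₂.2 ⟨d, Finset.mem_Icc.2 ⟨hd, hdN⟩, s, ?_, rfl⟩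
  have hb := hR _ hx.2
  have hd' : (0:ℝ) < d := by positivity
  rw [abs_div, abs_of_pos hd', div_le_iff₀ hd'] at hb
  have hb2 : |(s:ℝ)| ≤ ((R * q^N : ℕ) : ℝ) := by
    refine hb.trans ?_
    push_cast
    gcongr
    exact_mod_cast hdN
  have hb3 : |s| ≤ ((R * q^N : ℕ) : ℤ) := by exact_mod_cast hb2
  rw [Finset.mem_coe, Finset.mem_Icc]
  exact abs_le.1 hb3

theorem self_similar_tile_iff_infinite_intersection (q : ℕ) (hq : 3 ≤ q)
    (A : Finset ℚ) (hA : A.card = q) :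
    0 < volume (Kset q A) ↔
      ∃ p : ℕ, 2 ≤ p ∧ Nat.Coprime p q ∧ (Dset p ∩ Kset q A).Infinite := by
  obtain ⟨D, B, K, hD, hB, hK, hne, hs, hKD⟩ := reduction q hq A hA
  have hD0 : (D:ℝ) ≠ 0 := by positivity
  have hpre : Kset q A = (fun x : ℝ => (D:ℝ) * x) ⁻¹' K := by
    ext x; exact (hKD x).symm
  have hvol : 0 < volume (Kset q A) ↔ 0 < volume K := by
    rw [hpre, Real.volume_preimage_mul_left hD0, ENNReal.mul_pos_iff]
    have : 0 < ENNReal.ofReal |(D:ℝ)⁻¹| := ENNReal.ofReal_pos.2 (by positivity)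
    exact ⟨fun h => h.2, fun h => ⟨this, h⟩⟩
  constructor
  · intro h
    refine ⟨q + 1, by omega, by simp, ?_⟩
    apply infinite_of_interior _ (by omega)
    obtain ⟨y, hy⟩ := interior_of_pos q hq B K hK hs (hvol.1 h)
    have hc : Continuous (fun x : ℝ => (D:ℝ) * x) := by fun_prop
    rw [hpre]
    refine ⟨y / D, preimage_interior_subset_interior_preimage hc ?_⟩
    rw [Set.mem_preimage, mul_div_cancel₀ _ hD0]
    exact hy
  · rintro ⟨p, hp, hpq, hinf⟩
    rw [hvol]
    by_cases hfull : ∀ n, (levelSet q B n).card = q ^ n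
    · exact pos_of_full q hq B K hK hne hs hfull
    · exfalso
      have hfin := finite_of_not_full p q hp hq hpq B hB K hK hs hfull
      refine (hinf.image (f := fun x : ℝ => (D:ℝ) * x)
        (mul_right_injective₀ hD0).injOn).mono ?_ hfin
      rintro _ ⟨x, ⟨⟨n, hn, m, rfl⟩, hx⟩, rfl⟩
      refine ⟨⟨n, hn, D * m, ?_⟩, (hKD _).2 hx⟩
      push_cast
      ring
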